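/- Convergence of the Blahut–Arimoto scheme at rate O(1/M) (Theorem 1 / Proposition 1): Suppose π* is a policy maximizing J, i.e. J(π*) ≥ J(π) for every policy π. Then for every integer M ≥ 1 there exists an integer m with 0 ≤ m < M such that J(π*) − ∑_{s : p(s)>0} p(s) B_{priorᵐ, πᵐ⁺¹}V(s) ≤ (1/(M·β)) ∑_{s : p(s)>0} p(s) · max_{a∈A} log(1/π⁰(a|s)). In particular the best iterate among the first M rounds has optimality gap O(1/M). -/

import Mathlib

open Finset

/-- A probability distribution on a finite type: nonnegative and sums to one. -/
def IsDist {X : Type*} [Fintype X] (d : X → ℝ) : Prop :=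
  (∀ x, 0 ≤ d x) ∧ ∑ x, d x = 1

/-- Kullback–Leibler divergence: sum over points where `μ` is positive. -/
noncomputable def KL {X : Type*} [Fintype X] (μ ν : X → ℝ) : ℝ :=
  ∑ x, if 0 < μ x then μ x * Real.log (μ x / ν x) else 0

/-- Marginal action distribution of policy `π` under state distribution `p`. -/
noncomputable def margPol {S A : Type*} [Fintype S] [Fintype A]
    (p : S → ℝ) (π : S → A → ℝ) (a : A) : ℝ :=
  ∑ s, p s * π s a

/-- Evaluation operator `B_{q,π} V (s)` (with `F s a = R s a + γ 𝔼[V]` precomputed). -/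
noncomputable def Beval {S A : Type*} [Fintype S] [Fintype A]
    (F : S → A → ℝ) (β : ℝ) (q : A → ℝ) (π : S → A → ℝ) (s : S) : ℝ :=
  ∑ a, if 0 < π s a then π s a * (F s a - (1 / β) * Real.log (π s a / q a)) else 0

/-- Mutual-information-regularized objective `J(π)`. -/
noncomputable def Jobj {S A : Type*} [Fintype S] [Fintype A]
    (p : S → ℝ) (F : S → A → ℝ) (β : ℝ) (π : S → A → ℝ) : ℝ :=
  ∑ s, if 0 < p s then
    p s * ∑ a, (if 0 < π s a then
      π s a * (F s a - (1 / β) * Real.log (π s a / margPol p π a)) else 0)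
  else 0

/-- Blahut–Arimoto policy iterates. -/
noncomputable def BApol {S A : Type*} [Fintype S] [Fintype A]
    (p : S → ℝ) (F : S → A → ℝ) (β : ℝ) (π0 : S → A → ℝ) : ℕ → S → A → ℝ
  | 0 => π0
  | m + 1 => fun s a =>
      ((∑ s', p s' * BApol p F β π0 m s' a) * Real.exp (β * F s a)) /
        ∑ a', (∑ s', p s' * BApol p F β π0 m s' a') * Real.exp (β * F s a')

/-- Blahut–Arimoto prior iterates: the marginal of the `m`-th policy under `p`. -/
noncomputable def BAprior {S A : Type*} [Fintype S] [Fintype A]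
    (p : S → ℝ) (F : S → A → ℝ) (β : ℝ) (π0 : S → A → ℝ) (m : ℕ) (a : A) : ℝ :=
  ∑ s, p s * BApol p F β π0 m s a

/-!
The Blahut–Arimoto scheme is an alternating maximization, analysed by a Csiszár–Tusnády argument.
Against a prior `q`, the best policy is the Gibbs policy `g ∝ q exp (β F)`, and completing the
Kullback–Leibler divergence gives, for every policy `π` with marginal `m`,
`β (J(π) - ∑ₛ p(s) B_{q,g}V(s)) = KL(m‖q) - ∑ₛ p(s) KL(π(·|s)‖g(·|s))`.
When `q` is the marginal of `ρ`, the log-sum inequality bounds `KL(m‖q)` by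
`∑ₛ p(s) KL(π(·|s)‖ρ(·|s))`. With `ρ = πᵐ` and `g = πᵐ⁺¹` the right-hand side telescopes in `m`, so
the first `M` gaps sum to at most `(1/β) ∑ₛ p(s) KL(π(·|s)‖π⁰(·|s))`, and the least of them is at
most their average.
-/

lemma ite_pos_mul_of_nonneg {w : ℝ} (hw : 0 ≤ w) (y : ℝ) :
    (if 0 < w then w * y else 0) = w * y := by
  rcases hw.eq_or_lt with rfl | hw
  · simp
  · exact if_pos hw

lemma sum_mul_log_sum_div_sum_le {ι : Type*} (t : Finset ι) {a b : ι → ℝ}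
    (ha : ∀ i ∈ t, 0 ≤ a i) (hb : ∀ i ∈ t, 0 ≤ b i) (hab : ∀ i ∈ t, b i = 0 → a i = 0) :
    (∑ i ∈ t, a i) * Real.log ((∑ i ∈ t, a i) / ∑ i ∈ t, b i) ≤
      ∑ i ∈ t, a i * Real.log (a i / b i) := by
  rcases (sum_nonneg hb).eq_or_lt with hB | hB
  · have ha0 : ∀ i ∈ t, a i = 0 := fun i hi =>
      hab i hi ((sum_eq_zero_iff_of_nonneg hb).1 hB.symm i hi)
    have hrhs : ∀ i ∈ t, a i * Real.log (a i / b i) = 0 := fun i hi => by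
      rw [ha0 i hi, zero_mul]
    rw [sum_eq_zero ha0, sum_eq_zero hrhs, zero_mul]
  · set B := ∑ i ∈ t, b i
    have hcancel : ∀ i ∈ t, b i / B * (a i / b i) = a i / B := fun i hi => by
      rw [div_mul_eq_mul_div, mul_div_cancel_of_imp' (hab i hi)]
    have hrhs : ∀ i ∈ t, b i / B * (a i / b i * Real.log (a i / b i)) =
        a i * Real.log (a i / b i) / B := fun i hi => by
      rw [← mul_assoc, hcancel i hi, div_mul_eq_mul_div]
    have jensen := Real.convexOn_mul_log.map_sum_le (t := t) (w := fun i => b i / B)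
      (p := fun i => a i / b i) (fun i hi => div_nonneg (hb i hi) hB.le)
      (by rw [← sum_div, div_self hB.ne']) fun i hi => div_nonneg (ha i hi) (hb i hi)
    simp only [smul_eq_mul] at jensen
    rw [sum_congr rfl hcancel, sum_congr rfl hrhs, ← sum_div, ← sum_div,
      div_mul_eq_mul_div] at jensen
    exact (div_le_div_iff_of_pos_right hB).1 jensen

section KL

variable {X : Type*} [Fintype X] {μ ν : X → ℝ}

lemma IsDist.le_one (hμ : IsDist μ) (x : X) : μ x ≤ 1 :=
  hμ.2 ▸ single_le_sum (fun y _ => hμ.1 y) (mem_univ x)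

lemma KL_eq_sum (hμ : ∀ x, 0 ≤ μ x) : KL μ ν = ∑ x, μ x * Real.log (μ x / ν x) :=
  sum_congr rfl fun x _ => ite_pos_mul_of_nonneg (hμ x) _

lemma KL_self (μ : X → ℝ) : KL μ μ = 0 := by
  refine sum_eq_zero fun x _ => ?_
  split_ifs with hx
  · rw [div_self hx.ne', Real.log_one, mul_zero]
  · rfl

lemma KL_nonneg (hμ : IsDist μ) (hν : IsDist ν) (hμν : ∀ x, ν x = 0 → μ x = 0) :
    0 ≤ KL μ ν := by
  have := sum_mul_log_sum_div_sum_le univ (fun x _ => hμ.1 x) (fun x _ => hν.1 x)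
    fun x _ => hμν x
  rwa [hμ.2, hν.2, div_one, Real.log_one, mul_zero, ← KL_eq_sum hμ.1] at this

lemma KL_le_sup'_log_one_div [Nonempty X] (hμ : IsDist μ) (hν : ∀ x, 0 < ν x) :
    KL μ ν ≤ univ.sup' univ_nonempty fun x => Real.log (1 / ν x) := by
  set L := univ.sup' univ_nonempty fun x => Real.log (1 / ν x)
  have hterm : ∀ x, μ x * Real.log (μ x / ν x) ≤ μ x * L := fun x => by
    rcases (hμ.1 x).eq_or_lt with hx | hx
    · rw [← hx, zero_mul, zero_mul]
    · have hlog : Real.log (μ x / ν x) ≤ Real.log (1 / ν x) :=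
        Real.log_le_log (div_pos hx (hν x)) (div_le_div_of_nonneg_right (hμ.le_one x) (hν x).le)
      exact mul_le_mul_of_nonneg_left
        (hlog.trans (le_sup' (fun x => Real.log (1 / ν x)) (mem_univ x))) hx.le
  calc KL μ ν = ∑ x, μ x * Real.log (μ x / ν x) := KL_eq_sum hμ.1
    _ ≤ ∑ x, μ x * L := sum_le_sum fun x _ => hterm x
    _ = L := by rw [← sum_mul, hμ.2, one_mul]

end KL

section Policy

variable {S A : Type*} [Fintype S] [Fintype A] {p : S → ℝ} {π ρ : S → A → ℝ}

lemma margPol_nonneg (hp : ∀ s, 0 ≤ p s) {a : A} (hπ : ∀ s, 0 ≤ π s a) :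
    0 ≤ margPol p π a :=
  sum_nonneg fun s _ => mul_nonneg (hp s) (hπ s)

lemma mul_le_margPol (hp : ∀ s, 0 ≤ p s) {a : A} (hπ : ∀ s, 0 ≤ π s a) (s : S) :
    p s * π s a ≤ margPol p π a :=
  single_le_sum (f := fun s => p s * π s a) (fun s _ => mul_nonneg (hp s) (hπ s)) (mem_univ s)

lemma margPol_pos (hp : IsDist p) {a : A} (hπ : ∀ s, 0 < π s a) : 0 < margPol p π a := by
  obtain ⟨s, -, hs⟩ : ∃ s ∈ univ, 0 < p s :=
    exists_lt_of_sum_lt (by rw [hp.2, sum_const_zero]; exact one_pos)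
  exact (mul_pos hs (hπ s)).trans_le (mul_le_margPol hp.1 (fun s => (hπ s).le) s)

/-- The conditional Kullback–Leibler divergence `∑ₛ p(s) KL(π(·|s)‖ρ(·|s))` of two policies, which
serves as the Lyapunov function of the Blahut–Arimoto iteration. -/
noncomputable def condKL (p : S → ℝ) (π ρ : S → A → ℝ) : ℝ :=
  ∑ s, p s * KL (π s) (ρ s)

lemma condKL_nonneg (hp : ∀ s, 0 ≤ p s) (hπ : ∀ s, IsDist (π s)) (hρ : ∀ s, IsDist (ρ s))
    (hπρ : ∀ s a, ρ s a = 0 → π s a = 0) : 0 ≤ condKL p π ρ :=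
  sum_nonneg fun s _ => mul_nonneg (hp s) (KL_nonneg (hπ s) (hρ s) (hπρ s))

lemma condKL_le_sum_sup'_log_one_div [Nonempty A] (hp : ∀ s, 0 ≤ p s)
    (hπ : ∀ s, IsDist (π s)) (hρ : ∀ s a, 0 < ρ s a) :
    condKL p π ρ ≤ ∑ s, p s * univ.sup' univ_nonempty fun a => Real.log (1 / ρ s a) :=
  sum_le_sum fun s _ => mul_le_mul_of_nonneg_left (KL_le_sup'_log_one_div (hπ s) (hρ s)) (hp s)

lemma KL_margPol_le_condKL (hp : ∀ s, 0 ≤ p s) (hπ : ∀ s a, 0 ≤ π s a)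
    (hρ : ∀ s a, 0 ≤ ρ s a) (hπρ : ∀ s a, ρ s a = 0 → π s a = 0) :
    KL (margPol p π) (margPol p ρ) ≤ condKL p π ρ := by
  have hlogsum : ∀ a, margPol p π a * Real.log (margPol p π a / margPol p ρ a) ≤
      ∑ s, p s * (π s a * Real.log (π s a / ρ s a)) := fun a => by
    refine (sum_mul_log_sum_div_sum_le univ (fun s _ => mul_nonneg (hp s) (hπ s a))
      (fun s _ => mul_nonneg (hp s) (hρ s a)) fun s _ h => ?_).trans_eq
      (sum_congr rfl fun s _ => ?_)
    · exact mul_eq_zero.2 ((mul_eq_zero.1 h).imp_right (hπρ s a))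
    · rcases eq_or_ne (p s) 0 with hs | hs
      · simp only [hs, zero_mul]
      · rw [mul_div_mul_left _ _ hs, mul_assoc]
  calc KL (margPol p π) (margPol p ρ)
      = ∑ a, margPol p π a * Real.log (margPol p π a / margPol p ρ a) :=
        KL_eq_sum fun a => margPol_nonneg hp fun s => hπ s a
    _ ≤ ∑ a, ∑ s, p s * (π s a * Real.log (π s a / ρ s a)) := sum_le_sum fun a _ => hlogsum a
    _ = condKL p π ρ := by
        rw [sum_comm]
        exact sum_congr rfl fun s _ => by rw [KL_eq_sum (hπ s), mul_sum]

end Policy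

section Gibbs

variable {S A : Type*} [Fintype A] {F : S → A → ℝ} {β : ℝ} {q : A → ℝ}

/-- The partition function `Z(s) = ∑ₐ q(a) exp(β F(s,a))`, the normalizer of `gibbsPolicy`. -/
noncomputable def partitionFn (F : S → A → ℝ) (β : ℝ) (q : A → ℝ) (s : S) : ℝ :=
  ∑ a, q a * Real.exp (β * F s a)

/-- The Gibbs policy `q(a) exp(β F(s,a)) / Z(s)`, the maximizer of `π ↦ B_{q,π}V(s)`. -/
noncomputable def gibbsPolicy (F : S → A → ℝ) (β : ℝ) (q : A → ℝ) (s : S) (a : A) : ℝ :=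
  q a * Real.exp (β * F s a) / partitionFn F β q s

variable [Nonempty A]

lemma partitionFn_pos (hq : ∀ a, 0 < q a) (s : S) : 0 < partitionFn F β q s :=
  sum_pos (fun a _ => mul_pos (hq a) (Real.exp_pos _)) univ_nonempty

lemma gibbsPolicy_pos (hq : ∀ a, 0 < q a) (s : S) (a : A) : 0 < gibbsPolicy F β q s a :=
  div_pos (mul_pos (hq a) (Real.exp_pos _)) (partitionFn_pos hq s)

lemma isDist_gibbsPolicy (hq : ∀ a, 0 < q a) (s : S) : IsDist (gibbsPolicy F β q s) := by
  refine ⟨fun a => (gibbsPolicy_pos hq s a).le, ?_⟩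
  simp only [gibbsPolicy]
  rw [← sum_div]
  exact div_self (partitionFn_pos hq s).ne'

lemma log_gibbsPolicy (hq : ∀ a, 0 < q a) (s : S) (a : A) :
    Real.log (gibbsPolicy F β q s a) =
      Real.log (q a) + β * F s a - Real.log (partitionFn F β q s) := by
  rw [gibbsPolicy, Real.log_div (mul_pos (hq a) (Real.exp_pos _)).ne' (partitionFn_pos hq s).ne',
    Real.log_mul (hq a).ne' (Real.exp_pos _).ne', Real.log_exp]

variable [Fintype S] {π : S → A → ℝ}

lemma Beval_eq_log_partitionFn_sub_KL (hβ : β ≠ 0) (hq : ∀ a, 0 < q a) {s : S}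
    (hπ : IsDist (π s)) :
    Beval F β q π s =
      Real.log (partitionFn F β q s) / β - KL (π s) (gibbsPolicy F β q s) / β := by
  set L := Real.log (partitionFn F β q s)
  have hterm : ∀ a, (if 0 < π s a then
        π s a * (F s a - 1 / β * Real.log (π s a / q a)) else 0) =
      π s a * (L / β) - π s a * Real.log (π s a / gibbsPolicy F β q s a) / β := fun a => by
    rw [ite_pos_mul_of_nonneg (hπ.1 a)]
    rcases (hπ.1 a).eq_or_lt with ha | ha
    · simp only [← ha, zero_mul, zero_div, sub_zero]
    · rw [Real.log_div ha.ne' (hq a).ne', Real.log_div ha.ne' (gibbsPolicy_pos hq s a).ne',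
        log_gibbsPolicy hq]
      field_simp
      ring
  rw [Beval, sum_congr rfl fun a _ => hterm a, sum_sub_distrib, ← sum_mul, hπ.2, one_mul,
    ← sum_div, ← KL_eq_sum hπ.1]

lemma Beval_gibbsPolicy (hβ : β ≠ 0) (hq : ∀ a, 0 < q a) (s : S) :
    Beval F β q (gibbsPolicy F β q) s = Real.log (partitionFn F β q s) / β := by
  rw [Beval_eq_log_partitionFn_sub_KL hβ hq (isDist_gibbsPolicy hq s), KL_self, zero_div, sub_zero]

end Gibbs

section Objective

variable {S A : Type*} [Fintype S] [Fintype A] {p : S → ℝ} {F : S → A → ℝ} {β : ℝ} {q : A → ℝ}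
  {π ρ : S → A → ℝ}

lemma Jobj_eq_sum_Beval_add_KL (hp : ∀ s, 0 ≤ p s) (hq : ∀ a, 0 < q a)
    (hπ : ∀ s a, 0 ≤ π s a) :
    Jobj p F β π = ∑ s, p s * Beval F β q π s + KL (margPol p π) q / β := by
  have hterm : ∀ s a, p s * (π s a * (F s a - 1 / β * Real.log (π s a / margPol p π a))) =
      p s * (π s a * (F s a - 1 / β * Real.log (π s a / q a))) +
        p s * π s a * (Real.log (margPol p π a / q a) / β) := fun s a => by
    rcases (mul_nonneg (hp s) (hπ s a)).eq_or_lt with h | h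
    · simp only [← mul_assoc, ← h, zero_mul, add_zero]
    · have hm := h.trans_le (mul_le_margPol hp (fun s => hπ s a) s)
      have hπsa := pos_of_mul_pos_right h (hp s)
      rw [Real.log_div hπsa.ne' hm.ne', Real.log_div hπsa.ne' (hq a).ne',
        Real.log_div hm.ne' (hq a).ne']
      ring
  have hKL : ∑ s, ∑ a, p s * π s a * (Real.log (margPol p π a / q a) / β) =
      KL (margPol p π) q / β := by
    rw [sum_comm, KL_eq_sum fun a => margPol_nonneg hp fun s => hπ s a, sum_div]
    exact sum_congr rfl fun a _ => by rw [← sum_mul, mul_div_assoc, margPol]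
  simp only [Jobj, Beval, ite_pos_mul_of_nonneg (hp _), ite_pos_mul_of_nonneg (hπ _ _)]
  simp only [mul_sum, hterm, sum_add_distrib, hKL]

variable [Nonempty A]

lemma Jobj_sub_sum_Beval_gibbsPolicy (hβ : β ≠ 0) (hp : ∀ s, 0 ≤ p s) (hq : ∀ a, 0 < q a)
    (hπ : ∀ s, IsDist (π s)) :
    Jobj p F β π - ∑ s, p s * Beval F β q (gibbsPolicy F β q) s =
      (KL (margPol p π) q - condKL p π (gibbsPolicy F β q)) / β := by
  have hB : ∑ s, p s * Beval F β q π s = ∑ s, p s * Beval F β q (gibbsPolicy F β q) s -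
      condKL p π (gibbsPolicy F β q) / β := by
    rw [condKL, sum_div, ← sum_sub_distrib]
    refine sum_congr rfl fun s _ => ?_
    rw [Beval_eq_log_partitionFn_sub_KL hβ hq (hπ s), Beval_gibbsPolicy hβ hq]
    ring
  rw [Jobj_eq_sum_Beval_add_KL hp hq fun s => (hπ s).1, hB]
  ring

lemma Jobj_sub_sum_Beval_gibbsPolicy_margPol_le (hβ : 0 < β) (hp : IsDist p)
    (hπ : ∀ s, IsDist (π s)) (hρ : ∀ s a, 0 < ρ s a) :
    Jobj p F β π -
        ∑ s, p s * Beval F β (margPol p ρ) (gibbsPolicy F β (margPol p ρ)) s ≤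
      (condKL p π ρ - condKL p π (gibbsPolicy F β (margPol p ρ))) / β := by
  rw [Jobj_sub_sum_Beval_gibbsPolicy hβ.ne' hp.1 (fun a => margPol_pos hp fun s => hρ s a) hπ]
  gcongr
  exact KL_margPol_le_condKL hp.1 (fun s => (hπ s).1) (fun s a => (hρ s a).le)
    fun s a h => absurd h (hρ s a).ne'

end Objective

section BlahutArimoto

variable {S A : Type*} [Fintype S] [Fintype A] {p : S → ℝ} {F : S → A → ℝ} {β : ℝ}
  {π π0 : S → A → ℝ}

lemma BApol_succ (m : ℕ) :
    BApol p F β π0 (m + 1) = gibbsPolicy F β (BAprior p F β π0 m) :=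
  rfl

variable [Nonempty A]

lemma BApol_pos (hp : IsDist p) (hπ0 : ∀ s a, 0 < π0 s a) (m : ℕ) (s : S) (a : A) :
    0 < BApol p F β π0 m s a := by
  induction m generalizing s a with
  | zero => exact hπ0 s a
  | succ m ih =>
    rw [BApol_succ]
    exact gibbsPolicy_pos (fun a => margPol_pos hp fun s => ih s a) s a

lemma BAprior_pos (hp : IsDist p) (hπ0 : ∀ s a, 0 < π0 s a) (m : ℕ) (a : A) :
    0 < BAprior p F β π0 m a :=
  margPol_pos hp fun s => BApol_pos hp hπ0 m s a

lemma isDist_BApol_succ (hp : IsDist p) (hπ0 : ∀ s a, 0 < π0 s a) (m : ℕ) (s : S) :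
    IsDist (BApol p F β π0 (m + 1) s) := by
  rw [BApol_succ]
  exact isDist_gibbsPolicy (BAprior_pos hp hπ0 m) s

lemma Jobj_sub_sum_Beval_BApol_le (hβ : 0 < β) (hp : IsDist p) (hπ : ∀ s, IsDist (π s))
    (hπ0 : ∀ s a, 0 < π0 s a) (m : ℕ) :
    Jobj p F β π - ∑ s, p s * Beval F β (BAprior p F β π0 m) (BApol p F β π0 (m + 1)) s ≤
      (condKL p π (BApol p F β π0 m) - condKL p π (BApol p F β π0 (m + 1))) / β := by
  rw [BApol_succ]
  exact Jobj_sub_sum_Beval_gibbsPolicy_margPol_le hβ hp hπ (BApol_pos hp hπ0 m)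

lemma sum_Jobj_sub_sum_Beval_BApol_le (hβ : 0 < β) (hp : IsDist p) (hπ : ∀ s, IsDist (π s))
    (hπ0 : ∀ s a, 0 < π0 s a) {M : ℕ} (hM : 1 ≤ M) :
    ∑ m ∈ range M, (Jobj p F β π -
        ∑ s, p s * Beval F β (BAprior p F β π0 m) (BApol p F β π0 (m + 1)) s) ≤
      condKL p π π0 / β := by
  obtain ⟨k, rfl⟩ := Nat.exists_eq_add_of_le' hM
  have hfinal : 0 ≤ condKL p π (BApol p F β π0 (k + 1)) :=
    condKL_nonneg hp.1 hπ (isDist_BApol_succ hp hπ0 k)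
      fun s a h => absurd h (BApol_pos hp hπ0 (k + 1) s a).ne'
  calc _ ≤ ∑ m ∈ range (k + 1),
        (condKL p π (BApol p F β π0 m) - condKL p π (BApol p F β π0 (m + 1))) / β :=
        sum_le_sum fun m _ => Jobj_sub_sum_Beval_BApol_le hβ hp hπ hπ0 m
    _ = (condKL p π π0 - condKL p π (BApol p F β π0 (k + 1))) / β := by
        rw [← sum_div, sum_range_sub', BApol]
    _ ≤ condKL p π π0 / β := div_le_div_of_nonneg_right (sub_le_self _ hfinal) hβ.le

end BlahutArimoto

theorem blahut_arimoto_convergence_rate_general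
    {S A : Type*} [Fintype S] [Fintype A] [Nonempty A]
    {p : S → ℝ} (hp : IsDist p) {β : ℝ} (hβ : 0 < β) (F : S → A → ℝ)
    {π0 : S → A → ℝ} (hπ0 : ∀ s a, 0 < π0 s a) {π : S → A → ℝ} (hπ : ∀ s, IsDist (π s))
    {M : ℕ} (hM : 1 ≤ M) :
    ∃ m < M,
      Jobj p F β π -
          (∑ s, if 0 < p s then
            p s * Beval F β (BAprior p F β π0 m) (BApol p F β π0 (m + 1)) s else 0)
        ≤ (1 / ((M : ℝ) * β)) *
            ∑ s, (if 0 < p s then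
              p s * (Finset.univ.sup' Finset.univ_nonempty
                fun a => Real.log (1 / π0 s a)) else 0) := by
  simp only [ite_pos_mul_of_nonneg (hp.1 _)]
  set C := ∑ s, p s * univ.sup' univ_nonempty fun a => Real.log (1 / π0 s a)
  have hM0 : (M : ℝ) ≠ 0 := Nat.cast_ne_zero.2 (Nat.one_le_iff_ne_zero.1 hM)
  have htotal : ∑ m ∈ range M, (Jobj p F β π -
        ∑ s, p s * Beval F β (BAprior p F β π0 m) (BApol p F β π0 (m + 1)) s) ≤
      ∑ _m ∈ range M, 1 / ((M : ℝ) * β) * C := by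
    calc _ ≤ condKL p π π0 / β := sum_Jobj_sub_sum_Beval_BApol_le hβ hp hπ hπ0 hM
      _ ≤ C / β := by gcongr; exact condKL_le_sum_sup'_log_one_div hp.1 hπ hπ0
      _ = ∑ _m ∈ range M, 1 / ((M : ℝ) * β) * C := by
        rw [sum_const, card_range, nsmul_eq_mul]
        field_simp
  obtain ⟨m, hm, hgap⟩ := exists_le_of_sum_le (nonempty_range_iff.2 (by lia)) htotal
  exact ⟨m, mem_range.1 hm, hgap⟩

/-- Convergence of the Blahut–Arimoto scheme at rate O(1/M). -/
theorem blahut_arimoto_convergence_rate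
    {S A : Type*} [Fintype S] [Fintype A] [Nonempty S] [Nonempty A]
    (p : S → ℝ) (hp : IsDist p)
    (R : S → A → ℝ) (P : S → A → S → ℝ) (hP : ∀ s a, IsDist (P s a))
    (V : S → ℝ) (β : ℝ) (hβ : 0 < β) (γ : ℝ) (hγ : 0 < γ ∧ γ < 1)
    (F : S → A → ℝ) (hF : ∀ s a, F s a = R s a + γ * ∑ s', P s a s' * V s')
    (π0 : S → A → ℝ) (hπ0 : ∀ s, IsDist (π0 s)) (hπ0pos : ∀ s a, 0 < π0 s a)
    (πstar : S → A → ℝ) (hπstar : ∀ s, IsDist (πstar s))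
    (hopt : ∀ π : S → A → ℝ, (∀ s, IsDist (π s)) → Jobj p F β π ≤ Jobj p F β πstar)
    (M : ℕ) (hM : 1 ≤ M) :
    ∃ m < M,
      Jobj p F β πstar -
          (∑ s, if 0 < p s then
            p s * Beval F β (BAprior p F β π0 m) (BApol p F β π0 (m + 1)) s else 0)
        ≤ (1 / ((M : ℝ) * β)) *
            ∑ s, (if 0 < p s then
              p s * (Finset.univ.sup' Finset.univ_nonempty
                fun a => Real.log (1 / π0 s a)) else 0) :=
  blahut_arimoto_convergence_rate_general hp hβ F hπ0pos hπstar hM
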